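/- Let M be a structure equipped with a BP'-rank rk whose rank function is definable with parameters in a set C ⊆ M, and let N be an elementary extension of M. Then the canonical extension of rk to N is a BP_0'-rank relative to the same set of parameters C. -/

import Mathlib

/-!
The idea is that a condition on tuples expressed by a formula with parameters in `C` can be read
in `M` and in `N`, and by elementarity it is solvable in `N` only if it is solvable in `M`.
`Transfers` records such a pair of readings and is closed under the logical operations.

The central fact is `rank_transfers`: the formulas over `C` that define `rk (S_b) = k` in `M` define
the same relation for the extended rank in `N`. If the formula for `k` holds at `b` in `N`, then
the definition of the canonical extension gives rank `k`. Conversely, by monotonicity the ranks of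
subsets of `M ^ n` are bounded by `rk (M ^ n)`, so finitely many of these formulas cover all
nonempty members of the family in `M`, hence in `N`, and no rank is left undetermined.

Axiom 2 is then immediate. A failure of Axiom 1.1 in `N`, with given ranks, is a condition of this
kind and would yield a failure in `M`. For Axiom 4, a finite member of cardinality `j` in `N` yields
one of cardinality `j` in `M`.

For degree approximation, a nonempty index set over `f '' C` contains a point `f ∘ a` with `a` in
`M`. A partition of `S_(f ∘ a)` in `N` into `d` pieces of full rank yields `d` disjoint subsets of
full rank of `S_a` in `M` (`splits_of_canonExt`), and their number is bounded
(`exists_not_splits`): otherwise one could peel off full-rank pieces forever, contradicting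
Axiom 1.2.
-/

open FirstOrder FirstOrder.Language Set Cardinal

universe u v w

namespace BP

variable {L : FirstOrder.Language.{u, v}} {M : Type w} [L.Structure M]

/-- A rank function on a structure `M`: it assigns to every subset of a finite Cartesian
power of `M` a value in `WithBot ℕ`, where by convention the empty set gets `⊥ = -∞`,
and every nonempty parametrically definable set gets a natural number value. -/
structure RankFunction (L : FirstOrder.Language.{u, v}) (M : Type w) [L.Structure M] where
  rk : ∀ {n : ℕ}, Set (Fin n → M) → WithBot ℕ
  rk_empty : ∀ n : ℕ, rk (∅ : Set (Fin n → M)) = ⊥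
  rk_ne_bot : ∀ {n : ℕ} (A : Set (Fin n → M)),
    Set.Definable (Set.univ : Set M) L A → A.Nonempty → rk A ≠ ⊥

/-- The member `S_b = φ[M, b]` of the uniformly definable family given by the
parameter-free formula `φ(x, y)`, at the parameter tuple `b`. -/
def fiber {n m : ℕ} (φ : L.Formula (Fin n ⊕ Fin m)) (b : Fin m → M) : Set (Fin n → M) :=
  {x | φ.Realize (Sum.elim x b)}

namespace RankFunction

/-- Axiom 1.1 (weak monotonicity): `rk (A ∪ B) = max (rk A) (rk B)`. -/
def Axiom1_1 (r : RankFunction L M) : Prop :=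
  ∀ {n : ℕ} (A B : Set (Fin n → M)),
    Set.Definable (Set.univ : Set M) L A → Set.Definable (Set.univ : Set M) L B →
      r.rk (A ∪ B) = max (r.rk A) (r.rk B)

/-- Axiom 1.2 (finite degree): if `A` contains infinitely many pairwise disjoint nonempty
definable subsets each of rank at least `n`, then `rk A ≥ n + 1`. -/
def Axiom1_2 (r : RankFunction L M) : Prop :=
  ∀ {k : ℕ} (A : Set (Fin k → M)), Set.Definable (Set.univ : Set M) L A →
    ∀ n : ℕ,
      (∃ P : ℕ → Set (Fin k → M),
          (∀ i, Set.Definable (Set.univ : Set M) L (P i)) ∧ (∀ i, (P i).Nonempty) ∧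
          (∀ i, P i ⊆ A) ∧ (Pairwise fun i j => Disjoint (P i) (P j)) ∧
          ∀ i, (n : WithBot ℕ) ≤ r.rk (P i)) →
        ((n + 1 : ℕ) : WithBot ℕ) ≤ r.rk A

/-- Axiom 1 (monotonicity of rank): `rk A ≥ n + 1` iff `A` contains infinitely many pairwise
disjoint nonempty definable subsets each of rank at least `n`. -/
def Axiom1 (r : RankFunction L M) : Prop :=
  ∀ {k : ℕ} (A : Set (Fin k → M)), Set.Definable (Set.univ : Set M) L A →
    ∀ n : ℕ,
      (((n + 1 : ℕ) : WithBot ℕ) ≤ r.rk A ↔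
        ∃ P : ℕ → Set (Fin k → M),
          (∀ i, Set.Definable (Set.univ : Set M) L (P i)) ∧ (∀ i, (P i).Nonempty) ∧
          (∀ i, P i ⊆ A) ∧ (Pairwise fun i j => Disjoint (P i) (P j)) ∧
          ∀ i, (n : WithBot ℕ) ≤ r.rk (P i))

/-- Axiom 2 (definability of rank), relative to a parameter set `C`: for every uniformly
definable family `{S_b}` and every `k`, the set `{b | rk (S_b) = k}` is `C`-definable. -/
def Axiom2 (r : RankFunction L M) (C : Set M) : Prop :=
  ∀ {n m : ℕ} (φ : L.Formula (Fin n ⊕ Fin m)) (k : ℕ),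
    Set.Definable C L {b : Fin m → M | r.rk (fiber φ b) = (k : WithBot ℕ)}

/-- Axiom 3 (additivity of rank): if `f` is a definable function from `A` onto `B` all of whose
fibers have rank `n`, then `rk A = rk B + n`. -/
def Axiom3 (r : RankFunction L M) : Prop :=
  ∀ {k l : ℕ} (A : Set (Fin k → M)) (B : Set (Fin l → M))
    (f : (Fin k → M) → (Fin l → M)),
    Set.Definable (Set.univ : Set M) L A → Set.Definable (Set.univ : Set M) L B →
    Set.Definable (Set.univ : Set M) L
      {z : (Fin k ⊕ Fin l) → M | z ∘ Sum.inl ∈ A ∧ f (z ∘ Sum.inl) = z ∘ Sum.inr} →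
    Set.MapsTo f A B → Set.SurjOn f A B →
    ∀ n : ℕ, (∀ b ∈ B, r.rk (A ∩ f ⁻¹' {b}) = (n : WithBot ℕ)) →
      r.rk A = r.rk B + (n : WithBot ℕ)

/-- Axiom 4 (elimination of infinite quantifiers): for every uniformly definable family
`{S_b}` there is an integer `m₀` such that every `S_b` with at least `m₀` elements is
infinite (i.e. every finite `S_b` has fewer than `m₀` elements). -/
def Axiom4 (r : RankFunction L M) : Prop :=
  ∀ {n m : ℕ} (φ : L.Formula (Fin n ⊕ Fin m)), ∃ m₀ : ℕ,
    ∀ (b : Fin m → M) (h : (fiber φ b).Finite), h.toFinset.card < m₀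

/-- `A` can be partitioned into `d` pairwise disjoint nonempty definable subsets, each of
the same rank as `A`. -/
def IsRankPartition (r : RankFunction L M) {k : ℕ} (A : Set (Fin k → M)) (d : ℕ) : Prop :=
  ∃ P : Fin d → Set (Fin k → M),
    (∀ i, Set.Definable (Set.univ : Set M) L (P i)) ∧ (∀ i, (P i).Nonempty) ∧
    (∀ i, r.rk (P i) = r.rk A) ∧ (Pairwise fun i j => Disjoint (P i) (P j)) ∧
    (⋃ i, P i) = A

/-- `A` has degree `d`: it can be partitioned into `d` pairwise disjoint nonempty definable
pieces of full rank, but not into more. -/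
def HasDegree (r : RankFunction L M) {k : ℕ} (A : Set (Fin k → M)) (d : ℕ) : Prop :=
  r.IsRankPartition A d ∧ ∀ d' : ℕ, r.IsRankPartition A d' → d' ≤ d

/-- `A` has finite degree. -/
def HasFiniteDegree (r : RankFunction L M) {k : ℕ} (A : Set (Fin k → M)) : Prop :=
  ∃ d : ℕ, r.HasDegree A d

/-- The degree approximation property over `C`: in any uniformly definable family indexed by a
nonempty `C`-definable set, some member has finite degree. -/
def DegreeApprox (r : RankFunction L M) (C : Set M) : Prop :=
  ∀ {n m : ℕ} (A : Set (Fin m → M)), Set.Definable C L A → A.Nonempty →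
    ∀ φ : L.Formula (Fin n ⊕ Fin m), ∃ a₀ ∈ A, r.HasFiniteDegree (fiber φ a₀)

/-- The splitting approximation property over `C`: in any uniformly definable family of
infinite sets indexed by a nonempty `C`-definable set, some member `S_b` contains a definable
subset of rank `rk (S_b) - 1`. -/
def SplittingApprox (r : RankFunction L M) (C : Set M) : Prop :=
  ∀ {n m : ℕ} (B : Set (Fin m → M)), Set.Definable C L B → B.Nonempty →
    ∀ φ : L.Formula (Fin n ⊕ Fin m), (∀ b ∈ B, (fiber φ b).Infinite) →
      ∃ b ∈ B, ∃ S' : Set (Fin n → M), Set.Definable (Set.univ : Set M) L S' ∧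
        S' ⊆ fiber φ b ∧ r.rk S' + 1 = r.rk (fiber φ b)

/-- A `BP'`-rank (relative to `C`): Axioms 1.1, 1.2, 2 (over `C`), and 4. -/
def IsBP'Rank (r : RankFunction L M) (C : Set M) : Prop :=
  r.Axiom1_1 ∧ r.Axiom1_2 ∧ r.Axiom2 C ∧ r.Axiom4

/-- A `BP₀'`-rank relative to `C`: Axiom 1.1, the degree approximation property over `C`,
Axiom 2 over `C`, and Axiom 4. -/
def IsBP0'Rank (r : RankFunction L M) (C : Set M) : Prop :=
  r.Axiom1_1 ∧ r.DegreeApprox C ∧ r.Axiom2 C ∧ r.Axiom4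

/-- A `BP`-rank: Axioms 1, 2, 3, and 4. -/
def IsBPRank (r : RankFunction L M) : Prop :=
  r.Axiom1 ∧ r.Axiom2 Set.univ ∧ r.Axiom3 ∧ r.Axiom4

/-- A `BP₀`-rank relative to `C`: Axiom 1.1, degree approximation and splitting approximation
over `C`, Axiom 2 over `C`, Axiom 3, and Axiom 4. -/
def IsBP0Rank (r : RankFunction L M) (C : Set M) : Prop :=
  r.Axiom1_1 ∧ r.DegreeApprox C ∧ r.SplittingApprox C ∧ r.Axiom2 C ∧ r.Axiom3 ∧ r.Axiom4

/-- Generic indistinguishability: `x₁ ~ x₂` for `R` on `S` iff the set of `x ∈ S` where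
`R x₁ x` and `R x₂ x` disagree has rank strictly less than the rank of `S`. -/
def GenIndist (r : RankFunction L M) {k : ℕ} (S : Set (Fin k → M))
    (R : (Fin k → M) → (Fin k → M) → Prop) (x₁ x₂ : Fin k → M) : Prop :=
  r.rk {x | x ∈ S ∧ ¬(R x₁ x ↔ R x₂ x)} < r.rk S

/-- `A ≡ B`: the rank of the symmetric difference of `A` and `B` is strictly less than the
rank of their union. -/
def RkEquiv (r : RankFunction L M) {k : ℕ} (A B : Set (Fin k → M)) : Prop :=
  r.rk (symmDiff A B) < r.rk (A ∪ B)

end RankFunction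

open RankFunction

/-- The canonical extension relation: `S ⊆ N^k` gets rank `n` if `S` is a member, at a
parameter `b*` in the canonical extension of the index set, of a uniformly definable family
indexed by an `M`-definable set on whose `M`-points the rank is constantly `n`. -/
def CanonExtRank {N : Type w} [L.Structure N] (r : RankFunction L M) (_f : M ↪ₑ[L] N)
    {k : ℕ} (S : Set (Fin k → N)) (n : WithBot ℕ) : Prop :=
  ∃ (m l : ℕ) (φ : L.Formula (Fin k ⊕ Fin m)) (ψ : L.Formula (Fin m ⊕ Fin l))
    (c : Fin l → M),
    (∀ b : Fin m → M, ψ.Realize (Sum.elim b c) → r.rk (fiber φ b) = n) ∧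
    ∃ b' : Fin m → N, ψ.Realize (Sum.elim b' (_f ∘ c)) ∧ S = fiber φ b'

/-- `r'` is the canonical extension of `r` along the elementary embedding `f`. -/
def IsCanonExt {N : Type w} [L.Structure N] (r : RankFunction L M) (f : M ↪ₑ[L] N)
    (r' : RankFunction L N) : Prop :=
  ∀ {k : ℕ} (S : Set (Fin k → N)) (n : WithBot ℕ), CanonExtRank r f S n → r'.rk S = n

/-- A theory has the order property if some formula `φ(x̄; ȳ)` linearly orders pairs of
sequences of tuples in some model. -/
def HasOrderProperty (L : FirstOrder.Language.{0, 0}) (T : L.Theory) : Prop :=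
  ∃ (n m : ℕ) (φ : L.Formula (Fin n ⊕ Fin m)) (N : Theory.ModelType.{0, 0, 0} T)
    (a : ℕ → Fin n → N) (b : ℕ → Fin m → N),
    ∀ i j : ℕ, (φ.Realize (Sum.elim (a i) (b j)) ↔ i < j)

/-- A theory is stable if no formula has the order property. -/
def IsStableTheory (L : FirstOrder.Language.{0, 0}) (T : L.Theory) : Prop :=
  ¬ HasOrderProperty L T

/-- A theory is superstable if it is stable in every cardinal `κ ≥ 2 ^ ℵ₀`: over every
parameter set of size at most `κ` in a model, there are at most `κ` complete 1-types. -/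
def IsSuperstableTheory (L : FirstOrder.Language.{0, 0}) (T : L.Theory) : Prop :=
  ∀ κ : Cardinal.{0}, 2 ^ Cardinal.aleph0 ≤ κ →
    ∀ (N : Theory.ModelType.{0, 0, 0} T) (A : Set N), #A ≤ κ →
      #(((L[[A]]).completeTheory N).CompleteType (Fin 1)) ≤ κ

section Helpers

/-! ### Transferring definable conditions along an elementary embedding -/

section Transfer

theorem realize_congr {α : Type*} {φ : L.Formula α} {v w : α → M} (h : v = w) :
    φ.Realize v ↔ φ.Realize w := by
  rw [h]

variable {N : Type w} [L.Structure N] {f : M ↪ₑ[L] N} {C : Set M} {α β : Type}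

/-- The conditions `P` on `α`-tuples of `M` and `Q` on `α`-tuples of `N` are expressed by one and
the same `L`-formula with parameters in `C`, read in `N` through `f`. The parameters occur as
extra free variables indexed by `C`. -/
def Transfers (f : M ↪ₑ[L] N) (C : Set M) {α : Type} (P : (α → M) → Prop) (Q : (α → N) → Prop) :
    Prop :=
  ∃ φ : L.Formula (C ⊕ α), (∀ v, P v ↔ φ.Realize (Sum.elim (fun c : C => (c : M)) v)) ∧
    ∀ v, Q v ↔ φ.Realize (Sum.elim (fun c : C => f c) v)

namespace Transfers

theorem congr {P P' : (α → M) → Prop} {Q Q' : (α → N) → Prop} (h : Transfers f C P Q)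
    (hP : ∀ v, P' v ↔ P v) (hQ : ∀ v, Q' v ↔ Q v) : Transfers f C P' Q' := by
  obtain ⟨φ, h1, h2⟩ := h
  exact ⟨φ, fun v => (hP v).trans (h1 v), fun v => (hQ v).trans (h2 v)⟩

theorem formula (φ : L.Formula α) : Transfers f C (fun v => φ.Realize v) (fun v => φ.Realize v) :=
  ⟨φ.relabel Sum.inr, fun v => by simp [Formula.realize_relabel],
    fun v => by simp [Formula.realize_relabel]⟩

theorem eq (s t : α) : Transfers f C (fun v => v s = v t) (fun v => v s = v t) :=
  (formula (Term.equal (L := L) (Term.var s) (Term.var t))).congr (fun v => by simp)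
    (fun v => by simp)

theorem and {P P' : (α → M) → Prop} {Q Q' : (α → N) → Prop} (h : Transfers f C P Q)
    (h' : Transfers f C P' Q') :
    Transfers f C (fun v => P v ∧ P' v) (fun v => Q v ∧ Q' v) := by
  obtain ⟨φ, h1, h2⟩ := h
  obtain ⟨φ', h1', h2'⟩ := h'
  exact ⟨φ ⊓ φ', fun v => by simp [h1, h1'], fun v => by simp [h2, h2']⟩

theorem not {P : (α → M) → Prop} {Q : (α → N) → Prop} (h : Transfers f C P Q) :
    Transfers f C (fun v => ¬ P v) (fun v => ¬ Q v) := by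
  obtain ⟨φ, h1, h2⟩ := h
  exact ⟨φ.not, fun v => by simp [h1], fun v => by simp [h2]⟩

theorem const_imp (p : Prop) {P : (α → M) → Prop} {Q : (α → N) → Prop} (h : Transfers f C P Q) :
    Transfers f C (fun v => p → P v) (fun v => p → Q v) := by
  by_cases hp : p
  · simpa [hp] using h
  · exact (formula (⊤ : L.Formula α)).congr (fun v => by simp [hp]) (fun v => by simp [hp])

theorem all {ι : Type} [Finite ι] {P : ι → (α → M) → Prop} {Q : ι → (α → N) → Prop}
    (h : ∀ i, Transfers f C (P i) (Q i)) :
    Transfers f C (fun v => ∀ i, P i v) (fun v => ∀ i, Q i v) := by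
  choose φ h1 h2 using h
  exact ⟨Formula.iInf φ, fun v => by simp [h1], fun v => by simp [h2]⟩

theorem ex [Finite β] {P : (α ⊕ β → M) → Prop} {Q : (α ⊕ β → N) → Prop} (h : Transfers f C P Q) :
    Transfers f C (fun v => ∃ x, P (Sum.elim v x)) (fun v => ∃ x, Q (Sum.elim v x)) := by
  obtain ⟨φ, h1, h2⟩ := h
  refine ⟨(φ.relabel (Equiv.sumAssoc C α β).symm).iExs β, fun v => ?_, fun v => ?_⟩
  · rw [Formula.realize_iExs]
    refine exists_congr fun x => ?_
    rw [h1, Formula.realize_relabel]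
    exact realize_congr (by ext (c | a | b) <;> rfl)
  · rw [Formula.realize_iExs]
    refine exists_congr fun x => ?_
    rw [h2, Formula.realize_relabel]
    exact realize_congr (by ext (c | a | b) <;> rfl)

theorem comap (σ : α → β) {P : (α → M) → Prop} {Q : (α → N) → Prop} (h : Transfers f C P Q) :
    Transfers f C (fun v : β → M => P (v ∘ σ)) (fun v : β → N => Q (v ∘ σ)) := by
  obtain ⟨φ, h1, h2⟩ := h
  refine ⟨φ.relabel (Sum.map id σ), fun v => ?_, fun v => ?_⟩
  · refine (h1 _).trans (Iff.trans ?_ Formula.realize_relabel.symm)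
    exact realize_congr (by ext (c | a) <;> rfl)
  · refine (h2 _).trans (Iff.trans ?_ Formula.realize_relabel.symm)
    exact realize_congr (by ext (c | a) <;> rfl)

theorem mem_fiber {n m : ℕ} (φ : L.Formula (Fin n ⊕ Fin m)) (σ : Fin n → α) (τ : Fin m → α) :
    Transfers f C (fun v => v ∘ σ ∈ fiber φ (v ∘ τ)) (fun v => v ∘ σ ∈ fiber φ (v ∘ τ)) := by
  refine ((formula φ).comap (Sum.elim σ τ)).congr (fun v => ?_) (fun v => ?_)
  · exact realize_congr (by ext (c | a) <;> rfl)
  · exact realize_congr (by ext (c | a) <;> rfl)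

theorem apply_comp {P : (α → M) → Prop} {Q : (α → N) → Prop} (h : Transfers f C P Q)
    (v : α → M) : Q (f ∘ v) ↔ P v := by
  obtain ⟨φ, h1, h2⟩ := h
  rw [h1, h2, ← f.map_formula]
  exact realize_congr (by ext (c | a) <;> rfl)

/-- Elementarity with parameters `a` from `M`: a condition solvable in `N` is solvable in `M`. -/
theorem exists_elim [Finite β] {P : (α ⊕ β → M) → Prop} {Q : (α ⊕ β → N) → Prop}
    (h : Transfers f C P Q) (a : α → M) (b' : β → N) (hb : Q (Sum.elim (f ∘ a) b')) :
    ∃ b, P (Sum.elim a b) :=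
  (h.ex.apply_comp a).1 ⟨b', hb⟩

theorem exists_of_exists [Finite α] {P : (α → M) → Prop} {Q : (α → N) → Prop}
    (h : Transfers f C P Q) (v : α → N) (hv : Q v) : ∃ v, P v :=
  (h.comap (Sum.inr : α → Empty ⊕ α)).exists_elim Empty.elim v hv

theorem definable {P : (α → M) → Prop} {Q : (α → N) → Prop} (h : Transfers f C P Q) :
    Set.Definable (⇑f '' C) L {v | Q v} := by
  obtain ⟨φ, -, h2⟩ := h
  rw [Set.definable_iff_exists_formula_sum]
  refine ⟨φ.relabel (Sum.map (fun c : C => ⟨f c, c, c.2, rfl⟩) id), ?_⟩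
  ext v
  refine (h2 v).trans (Iff.trans ?_ Formula.realize_relabel.symm)
  exact realize_congr (by ext (c | a) <;> rfl)

/-- A set definable in `N` over `f '' C` corresponds to a set defined in `M` over `C`. -/
theorem of_definable {A : Set (α → N)} (hA : Set.Definable (⇑f '' C) L A) :
    ∃ P : (α → M) → Prop, Transfers f C P (fun v => v ∈ A) := by
  rw [Set.definable_iff_exists_formula_sum] at hA
  obtain ⟨φ, rfl⟩ := hA
  choose g hg using fun c : (⇑f '' C) => c.2
  refine ⟨_, φ.relabel (Sum.map (fun c => ⟨g c, (hg c).1⟩) id), fun v => Iff.rfl, fun v => ?_⟩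
  refine Iff.trans ?_ Formula.realize_relabel.symm
  refine realize_congr ?_
  ext (c | a)
  · exact (hg c).2.symm
  · rfl

end Transfers

end Transfer

/-! ### Definable sets as members of uniformly definable families -/

/-- Only finitely many of the parameter variables `ι` occur in a formula, so they can be replaced
by a finite tuple, uniformly in all structures. -/
theorem exists_fin_params {ι : Type*} {α : Type} (φ : L.Formula (ι ⊕ α)) :
    ∃ (l : ℕ) (ψ : L.Formula (α ⊕ Fin l)) (c : Fin l → ι),
      ∀ (K : Type w) [L.Structure K] (g : ι → K) (v : α → K),
        ψ.Realize (Sum.elim v (g ∘ c)) ↔ φ.Realize (Sum.elim g v) := by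
  classical
  let s := φ.freeVarFinset.toLeft
  let e := s.equivFin
  refine ⟨s.card, φ.restrictFreeVar fun x => Sum.casesOn x.1
    (fun i hi => Sum.inr (e ⟨i, by simpa [s] using hi⟩)) (fun a _ => Sum.inl a) x.2,
    fun i => (e.symm i : ι), ?_⟩
  intro K _ g v
  refine BoundedFormula.realize_restrictFreeVar _ ?_
  rintro ⟨i | a, h⟩ <;> simp

theorem definable_fiber {n m : ℕ} (φ : L.Formula (Fin n ⊕ Fin m)) (b : Fin m → M) :
    Set.Definable (Set.univ : Set M) L (fiber φ b) := by
  rw [Set.definable_iff_exists_formula_sum]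
  refine ⟨φ.relabel (Sum.elim Sum.inr (fun i => Sum.inl ⟨b i, trivial⟩)), ?_⟩
  ext x
  refine Iff.trans ?_ Formula.realize_relabel.symm
  exact realize_congr (by ext (c | a) <;> rfl)

theorem exists_eq_fiber {n : ℕ} {A : Set (Fin n → M)} (hA : Set.Definable Set.univ L A) :
    ∃ (m : ℕ) (φ : L.Formula (Fin n ⊕ Fin m)) (b : Fin m → M), A = fiber φ b := by
  rw [Set.definable_iff_exists_formula_sum] at hA
  obtain ⟨φ, rfl⟩ := hA
  obtain ⟨l, ψ, c, h⟩ := exists_fin_params.{u, v, w} φ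
  refine ⟨l, ψ, fun i => c i, ?_⟩
  ext x
  exact (h M (fun c : (Set.univ : Set M) => (c : M)) x).symm

/-! ### Ranks and degrees in `M` -/

section Rank

variable {r : RankFunction L M}

theorem rk_mono (h : r.Axiom1_1) {n : ℕ} {A B : Set (Fin n → M)}
    (hA : Set.Definable Set.univ L A) (hB : Set.Definable Set.univ L B) (hAB : A ⊆ B) :
    r.rk A ≤ r.rk B := by
  have := h A B hA hB
  rw [Set.union_eq_self_of_subset_left hAB] at this
  rw [this]
  exact le_max_left _ _

theorem rk_eq_bot_iff {n m : ℕ} (φ : L.Formula (Fin n ⊕ Fin m)) (b : Fin m → M) :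
    r.rk (fiber φ b) = ⊥ ↔ ¬ (fiber φ b).Nonempty := by
  constructor
  · intro h hne
    exact r.rk_ne_bot _ (definable_fiber φ b) hne h
  · intro h
    rw [Set.not_nonempty_iff_eq_empty.1 h, r.rk_empty]

/-- The members of any family of definable subsets of `M ^ n` have rank at most that of
`M ^ n`. -/
theorem exists_rank_bound (h : r.Axiom1_1) (n : ℕ) : ∃ K : ℕ, ∀ {m : ℕ}
    (φ : L.Formula (Fin n ⊕ Fin m)) (b : Fin m → M), (fiber φ b).Nonempty →
      ∃ j ≤ K, r.rk (fiber φ b) = (j : WithBot ℕ) := by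
  refine ⟨(r.rk (Set.univ : Set (Fin n → M))).unbotD 0, fun φ b hne => ?_⟩
  obtain ⟨j, hj⟩ := WithBot.ne_bot_iff_exists.1 (r.rk_ne_bot _ (definable_fiber φ b) hne)
  have hle := rk_mono h (definable_fiber φ b) Set.definable_univ (Set.subset_univ _)
  rw [← hj] at hle
  refine ⟨j, ?_, hj.symm⟩
  obtain ⟨k, hk⟩ := WithBot.ne_bot_iff_exists.1
    (ne_bot_of_le_ne_bot WithBot.coe_ne_bot hle)
  rw [← hk] at hle ⊢
  simpa using hle

/-- `A` contains `d` pairwise disjoint definable subsets of rank exactly `n`. -/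
def Splits (r : RankFunction L M) (n : ℕ) {k : ℕ} (A : Set (Fin k → M)) (d : ℕ) : Prop :=
  ∃ P : Fin d → Set (Fin k → M), (∀ i, Set.Definable (Set.univ : Set M) L (P i)) ∧
    (∀ i, P i ⊆ A) ∧ (Pairwise fun i j => Disjoint (P i) (P j)) ∧
    ∀ i, r.rk (P i) = (n : WithBot ℕ)

theorem Splits.mono {n k d e : ℕ} {A : Set (Fin k → M)} (h : Splits r n A d) (hed : e ≤ d) :
    Splits r n A e := by
  obtain ⟨P, h1, h2, h3, h4⟩ := h
  exact ⟨fun i => P (Fin.castLE hed i), fun i => h1 _, fun i => h2 _,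
    fun i j hij => h3 (fun h => hij (Fin.castLE_injective hed h)), fun i => h4 _⟩

/-- If `A` splits into arbitrarily many pieces, so does one of the two parts into which a
definable set cuts it: each piece leaves full rank in one of the parts. -/
theorem splits_inter_or_diff (h : r.Axiom1_1) {n k : ℕ} {A B : Set (Fin k → M)}
    (hB : Set.Definable Set.univ L B) (hA : ∀ d, Splits r n A d) :
    (∀ d, Splits r n (A ∩ B) d) ∨ ∀ d, Splits r n (A \ B) d := by
  classical
  by_contra! hcon
  obtain ⟨⟨d₁, hd₁⟩, d₂, hd₂⟩ := hcon
  obtain ⟨P, h1, h2, h3, h4⟩ := hA (d₁ + d₂)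
  let I : Finset (Fin (d₁ + d₂)) := {i | r.rk (P i ∩ B) = (n : WithBot ℕ)}
  have hcard : I.card + Iᶜ.card = d₁ + d₂ := by
    rw [Finset.card_add_card_compl, Fintype.card_fin]
  rcases le_or_gt d₁ I.card with hle | hlt
  · refine hd₁ ⟨fun i => P (I.orderEmbOfCardLe hle i) ∩ B, fun i => (h1 _).inter hB,
      fun i => Set.inter_subset_inter_left _ (h2 _), fun i j hij => ?_, fun i => ?_⟩
    · exact (h3 (fun h => hij ((I.orderEmbOfCardLe hle).injective h))).mono
        Set.inter_subset_left Set.inter_subset_left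
    · have := I.orderEmbOfCardLe_mem hle i
      simpa [I] using this
  · have hle : d₂ ≤ Iᶜ.card := by omega
    refine hd₂ ⟨fun i => P (Iᶜ.orderEmbOfCardLe hle i) \ B, fun i => (h1 _).sdiff hB,
      fun i => Set.sdiff_subset_sdiff_left (h2 _), fun i j hij => ?_, fun i => ?_⟩
    · exact (h3 (fun h => hij ((Iᶜ.orderEmbOfCardLe hle).injective h))).mono
        Set.sdiff_subset Set.sdiff_subset
    · have hmem := Iᶜ.orderEmbOfCardLe_mem hle i
      change r.rk (P (Iᶜ.orderEmbOfCardLe hle i) \ B) = _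
      generalize Iᶜ.orderEmbOfCardLe hle i = t at hmem ⊢
      have hne : r.rk (P t ∩ B) ≠ (n : WithBot ℕ) := by simpa [I] using hmem
      have hmax := h (P t ∩ B) (P t \ B) ((h1 t).inter hB) ((h1 t).sdiff hB)
      rw [Set.inter_union_sdiff, h4] at hmax
      rcases max_choice (r.rk (P t ∩ B)) (r.rk (P t \ B)) with hc | hc
      · exact absurd (hmax.trans hc).symm hne
      · exact (hmax.trans hc).symm

/-- One may peel off a piece of rank `n` and keep a rest that still splits into arbitrarily many
pieces. -/
theorem exists_piece (h : r.Axiom1_1) {n k : ℕ} {A : Set (Fin k → M)}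
    (hdef : Set.Definable Set.univ L A) (hA : ∀ d, Splits r n A d) :
    ∃ P A' : Set (Fin k → M), Set.Definable Set.univ L P ∧ P ⊆ A ∧
      r.rk P = (n : WithBot ℕ) ∧ A' ⊆ A ∧ Disjoint P A' ∧
      Set.Definable Set.univ L A' ∧ ∀ d, Splits r n A' d := by
  obtain ⟨B, h1, h2, h3, h4⟩ := hA 2
  rcases splits_inter_or_diff h (h1 0) hA with hs | hs
  · exact ⟨B 1, A ∩ B 0, h1 1, h2 1, h4 1, Set.inter_subset_left,
      (h3 (by decide : (1 : Fin 2) ≠ 0)).mono_right Set.inter_subset_right,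
      hdef.inter (h1 0), hs⟩
  · exact ⟨B 0, A \ B 0, h1 0, h2 0, h4 0, Set.sdiff_subset, Set.disjoint_sdiff_right,
      hdef.sdiff (h1 0), hs⟩

/-- By the finite degree axiom, a definable set of rank `n` has a bound on the number of its
pairwise disjoint definable subsets of rank `n`. -/
theorem exists_not_splits (h : r.Axiom1_1) (h' : r.Axiom1_2) {n k : ℕ} {A : Set (Fin k → M)}
    (hdef : Set.Definable Set.univ L A) (hrk : r.rk A = (n : WithBot ℕ)) :
    ∃ d, ¬ Splits r n A d := by
  by_contra! hA
  let X := {A : Set (Fin k → M) // Set.Definable (Set.univ : Set M) L A ∧ ∀ d, Splits r n A d}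
  choose P A' hP hPA hrkP hA'A hdisj hA' hs using
    fun X : X => exists_piece h X.2.1 X.2.2
  let s : ℕ → X := fun i => Nat.rec ⟨A, hdef, hA⟩ (fun _ x => ⟨A' x, hA' x, hs x⟩) i
  have hanti : Antitone fun i => (s i).1 :=
    antitone_nat_of_succ_le (f := fun i => (s i).1) fun i => hA'A (s i)
  have := h' A hdef n ⟨fun i => P (s i), fun i => hP _, fun i => ?_,
    fun i => (hPA _).trans (hanti (Nat.zero_le i)), ?_, fun i => (hrkP _).ge⟩
  · rw [hrk] at this
    exact absurd (WithBot.coe_le_coe.1 this) (Nat.not_succ_le_self n)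
  · rw [Set.nonempty_iff_ne_empty]
    intro he
    have := hrkP (s i)
    rw [show P (s i) = ∅ from he, r.rk_empty] at this
    exact WithBot.bot_ne_coe this
  · refine (pairwise_disjoint_on fun i => P (s i)).2 fun i j hij => ?_
    exact (hdisj (s i)).mono_right ((hPA (s j)).trans (hanti (Nat.succ_le_of_lt hij)))

end Rank

/-! ### The canonical extension -/

section Extension

variable {N : Type w} [L.Structure N] {f : M ↪ₑ[L] N} {C : Set M}
  {r : RankFunction L M} {r' : RankFunction L N}

theorem nonempty_transfers {n m : ℕ} (φ : L.Formula (Fin n ⊕ Fin m)) :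
    Transfers f C (fun b => (fiber φ b).Nonempty) (fun b => (fiber φ b).Nonempty) :=
  (Transfers.mem_fiber φ (Sum.inr : Fin n → Fin m ⊕ Fin n) Sum.inl).ex

/-- The formula that says in `M` that the rank of a member of a family is `k` says the same in
`N`. This rests on the boundedness of ranks within a family: finitely many of these formulas cover
all nonempty members in `M`, hence also in `N`. -/
theorem rank_transfers (h1 : r.Axiom1_1) (h2 : r.Axiom2 C) (hr' : IsCanonExt r f r') {n m : ℕ}
    (φ : L.Formula (Fin n ⊕ Fin m)) (k : WithBot ℕ) :
    Transfers f C (fun b => r.rk (fiber φ b) = k) (fun b => r'.rk (fiber φ b) = k) := by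
  induction k using WithBot.recBotCoe with
  | bot => exact (nonempty_transfers φ).not.congr (rk_eq_bot_iff φ) (rk_eq_bot_iff φ)
  | coe k =>
    have hex : ∀ k : ℕ, ∃ Q : (Fin m → N) → Prop,
        Transfers f C (fun b => r.rk (fiber φ b) = (k : WithBot ℕ)) Q ∧
          ∀ b, Q b → r'.rk (fiber φ b) = (k : WithBot ℕ) := by
      intro k
      obtain ⟨θ, hθ⟩ := Set.definable_iff_exists_formula_sum.1 (h2 φ k)
      refine ⟨fun b => θ.Realize (Sum.elim (fun c : C => f c) b),
        ⟨θ, fun v => Set.ext_iff.1 hθ v, fun v => Iff.rfl⟩, fun b hb => ?_⟩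
      obtain ⟨l, ψ, c, hψ⟩ := exists_fin_params.{u, v, w} θ
      refine hr' _ _ ⟨m, l, φ, ψ, fun i => c i, fun a ha => ?_, b, ?_, rfl⟩
      · exact (Set.ext_iff.1 hθ a).2 ((hψ M (fun c : C => (c : M)) a).1 ha)
      · exact (hψ N (fun c : C => f c) b).2 hb
    choose Q hQ hQr using hex
    refine (hQ k).congr (fun _ => Iff.rfl) fun b => ⟨fun hb => ?_, hQr k b⟩
    by_contra hnot
    obtain ⟨K, hK⟩ := exists_rank_bound h1 n
    have hne : (fiber φ b).Nonempty := by
      by_contra hemp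
      rw [(rk_eq_bot_iff φ b).2 hemp] at hb
      exact WithBot.bot_ne_coe hb
    obtain ⟨a, ha, ha'⟩ := ((nonempty_transfers φ).and
      (Transfers.all fun j : Fin (K + 1) => (hQ j).not)).exists_of_exists b
        ⟨hne, fun j hj => by
          have hjk : (j : ℕ) = k := by
            have := (hQr j b hj).symm.trans hb
            exact WithBot.coe_injective this
          exact hnot (hjk ▸ hj)⟩
    obtain ⟨j, hj, hjr⟩ := hK φ a ha
    exact ha' ⟨j, Nat.lt_succ_of_le hj⟩ hjr

theorem canonExt_weakMono (h1 : r.Axiom1_1) (h2 : r.Axiom2 C) (hr' : IsCanonExt r f r') :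
    r'.Axiom1_1 := by
  intro n A B hA hB
  obtain ⟨p, φ, a, rfl⟩ := exists_eq_fiber hA
  obtain ⟨q, ψ, b, rfl⟩ := exists_eq_fiber hB
  -- The union is a member of a family whose parameter tuple concatenates the two given ones.
  let χ : L.Formula (Fin n ⊕ Fin (p + q)) :=
    φ.relabel (Sum.map id (Fin.castAdd q)) ⊔ ψ.relabel (Sum.map id (Fin.natAdd p))
  have hχ : ∀ {K : Type w} [L.Structure K] (v : Fin (p + q) → K),
      fiber χ v = fiber φ (v ∘ Fin.castAdd q) ∪ fiber ψ (v ∘ Fin.natAdd p) := by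
    intro K _ v
    ext x
    simp only [fiber, χ, Set.mem_union, Set.mem_ofPred_eq, Formula.realize_sup,
      Formula.realize_relabel, Sum.elim_comp_map, Function.comp_id]
  have ha : Fin.append a b ∘ Fin.castAdd q = a := by ext i; simp
  have hb : Fin.append a b ∘ Fin.natAdd p = b := by ext i; simp
  obtain ⟨v, e1, e2, e3⟩ := ((rank_transfers h1 h2 hr' χ (r'.rk (fiber χ (Fin.append a b)))).and
    (((rank_transfers h1 h2 hr' φ (r'.rk (fiber φ a))).comap (Fin.castAdd q)).and
    ((rank_transfers h1 h2 hr' ψ (r'.rk (fiber ψ b))).comap (Fin.natAdd p)))).exists_of_exists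
      (Fin.append a b) ⟨rfl, by rw [ha], by rw [hb]⟩
  rw [hχ, hχ, ha, hb, h1 _ _ (definable_fiber _ _) (definable_fiber _ _), e2, e3] at e1
  exact e1.symm

theorem canonExt_elimInfinite (r' : RankFunction L N) (h4 : r.Axiom4) (f : M ↪ₑ[L] N) :
    r'.Axiom4 := by
  intro n m φ
  obtain ⟨m₀, hm₀⟩ := h4 φ
  refine ⟨m₀, fun b hfin => ?_⟩
  have e := hfin.toFinset.equivFin.symm
  revert e
  generalize hfin.toFinset.card = j
  intro e
  -- The condition says that the fiber over the left variables is enumerated without repetition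
  -- by the right ones.
  have key := (Transfers.all (f := f) (C := ∅) fun i : Fin j =>
      Transfers.mem_fiber φ (fun t => Sum.inr (i, t)) (Sum.inl : Fin m → Fin m ⊕ Fin j × Fin n)).and
    ((Transfers.all fun i : Fin j => Transfers.all fun i' : Fin j => Transfers.const_imp (i ≠ i')
      (Transfers.all fun t : Fin n => Transfers.eq (L := L)
        (Sum.inr (i, t) : Fin m ⊕ Fin j × Fin n) (Sum.inr (i', t))).not).and
    ((Transfers.mem_fiber φ (Sum.inr : Fin n → (Fin m ⊕ Fin j × Fin n) ⊕ Fin n)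
        (Sum.inl ∘ Sum.inl)).and
      (Transfers.all fun i : Fin j => (Transfers.all fun t : Fin n => Transfers.eq (L := L)
        (Sum.inr t : (Fin m ⊕ Fin j × Fin n) ⊕ Fin n) (Sum.inl (Sum.inr (i, t)))).not)).ex.not)
  have hex := key.exists_of_exists (Sum.elim b fun it => (e it.1 : Fin n → N) it.2)
    ⟨fun i => hfin.mem_toFinset.1 (e i).2,
      fun i i' hii' heq => hii' (e.injective (Subtype.ext (funext heq))),
      fun ⟨x, hx, hx'⟩ => hx' (e.symm ⟨x, hfin.mem_toFinset.2 hx⟩) fun t => by simp⟩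
  obtain ⟨v, hv1, hv2, hv3⟩ := hex
  -- In `M`, such an enumeration shows that the fiber is finite with exactly `j` elements.
  let g : Fin j → Fin n → M := fun i t => v (Sum.inr (i, t))
  have hg : Function.Injective g := fun i i' h => by
    by_contra hne
    exact hv2 i i' hne fun t => congrFun h t
  have hrange : fiber φ (v ∘ Sum.inl) = Set.range g := by
    refine Set.Subset.antisymm (fun x hx => ?_) ?_
    · by_contra hx'
      refine hv3 ⟨x, hx, fun i hi => hx' ⟨i, ?_⟩⟩
      funext t
      exact (hi t).symm
    · rintro _ ⟨i, rfl⟩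
      exact hv1 i
  have hfin' : (fiber φ (v ∘ Sum.inl)).Finite := hrange ▸ Set.finite_range g
  have := hm₀ _ hfin'
  rwa [← Set.ncard_eq_toFinset_card _ hfin', hrange, Set.ncard_range_of_injective hg,
    Nat.card_fin] at this

/-- Pairwise disjoint rank `n` pieces of a set defined in `N` with parameters from `M`
can be found already in `M`. -/
theorem splits_of_canonExt (h1 : r.Axiom1_1) (h2 : r.Axiom2 C) (hr' : IsCanonExt r f r')
    {k m n d : ℕ} (φ : L.Formula (Fin k ⊕ Fin m)) (a : Fin m → M)
    (h : Splits r' n (fiber φ (f ∘ a)) d) : Splits r n (fiber φ a) d := by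
  obtain ⟨P, hP, hsub, hdisj, hrk⟩ := h
  choose q ψ b hb using fun i => exists_eq_fiber (hP i)
  obtain rfl : P = fun i => fiber (ψ i) (b i) := funext hb
  let τ : ∀ i : Fin d, Fin (q i) → Fin m ⊕ (Σ i, Fin (q i)) := fun i t => Sum.inr ⟨i, t⟩
  have key := (Transfers.all fun i : Fin d =>
      (rank_transfers h1 h2 hr' (ψ i) (n : WithBot ℕ)).comap (τ i)).and
    ((Transfers.all fun i : Fin d =>
      ((Transfers.mem_fiber (ψ i) (Sum.inr : Fin k → (Fin m ⊕ (Σ i, Fin (q i))) ⊕ Fin k)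
        (Sum.inl ∘ τ i)).and
      (Transfers.mem_fiber φ Sum.inr (Sum.inl ∘ Sum.inl)).not).ex.not).and
    (Transfers.all fun i : Fin d => Transfers.all fun j : Fin d => Transfers.const_imp (i ≠ j)
      ((Transfers.mem_fiber (ψ i) (Sum.inr : Fin k → (Fin m ⊕ (Σ i, Fin (q i))) ⊕ Fin k)
        (Sum.inl ∘ τ i)).and
      (Transfers.mem_fiber (ψ j) Sum.inr (Sum.inl ∘ τ j))).ex.not))
  have hex := key.exists_elim a (fun s => b s.1 s.2)
    ⟨hrk, fun i ⟨x, hx, hx'⟩ => hx' (hsub i hx),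
      fun i j hij ⟨x, hx, hx'⟩ => Set.disjoint_left.1 (hdisj hij) hx hx'⟩
  obtain ⟨v, hv1, hv2, hv3⟩ := hex
  refine ⟨fun i => fiber (ψ i) (fun t => v ⟨i, t⟩), fun i => definable_fiber _ _,
    fun i x hx => ?_, fun i j hij => Set.disjoint_left.2 fun x hx hx' => ?_, hv1⟩
  · by_contra hx'
    exact hv2 i ⟨x, hx, hx'⟩
  · exact hv3 i j hij ⟨x, hx, hx'⟩

theorem hasFiniteDegree_of_bound {k : ℕ} {A : Set (Fin k → N)} {d₀ D : ℕ}
    (hd₀ : r'.IsRankPartition A d₀) (hD : ∀ d, r'.IsRankPartition A d → d ≤ D) :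
    r'.HasFiniteDegree A := by
  classical
  exact ⟨Nat.findGreatest (r'.IsRankPartition A) D,
    Nat.findGreatest_spec (hD d₀ hd₀) hd₀,
    fun d hd => Nat.le_findGreatest (hD d hd) hd⟩

theorem canonExt_hasFiniteDegree (h1 : r.Axiom1_1) (h1' : r.Axiom1_2) (h2 : r.Axiom2 C)
    (hr' : IsCanonExt r f r') {k m : ℕ} (φ : L.Formula (Fin k ⊕ Fin m)) (a : Fin m → M) :
    r'.HasFiniteDegree (fiber φ (f ∘ a)) := by
  rcases (fiber φ (f ∘ a)).eq_empty_or_nonempty with he | hne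
  · rw [he]
    refine hasFiniteDegree_of_bound (d₀ := 0) (D := 0)
      ⟨Fin.elim0, fun i => i.elim0, fun i => i.elim0, fun i => i.elim0, fun i => i.elim0,
        by simp⟩ ?_
    rintro d ⟨P, -, hne, -, -, hU⟩
    by_contra! hd
    obtain ⟨x, hx⟩ := hne ⟨0, hd⟩
    exact (Set.ext_iff.1 hU x).1 (Set.mem_iUnion.2 ⟨_, hx⟩)
  · obtain ⟨n, hn⟩ := WithBot.ne_bot_iff_exists.1
      (r'.rk_ne_bot _ (definable_fiber φ (f ∘ a)) hne)
    have hrk : r.rk (fiber φ a) = (n : WithBot ℕ) :=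
      ((rank_transfers h1 h2 hr' φ (n : WithBot ℕ)).apply_comp a).1 hn.symm
    obtain ⟨D, hD⟩ := exists_not_splits h1 h1' (definable_fiber φ a) hrk
    refine hasFiniteDegree_of_bound (d₀ := 1) (D := D)
      ⟨fun _ => fiber φ (f ∘ a), fun _ => definable_fiber _ _, fun _ => hne, fun _ => rfl,
        fun i j hij => absurd (Subsingleton.elim i j) hij, Set.iUnion_const _⟩ ?_
    rintro d ⟨P, hP, -, hPrk, hdisj, hU⟩
    by_contra! hd
    refine hD (Splits.mono (splits_of_canonExt h1 h2 hr' φ a ⟨P, hP, fun i => ?_, hdisj,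
      fun i => (hPrk i).trans hn.symm⟩) hd.le)
    rw [← hU]
    exact Set.subset_iUnion P i

end Extension

end Helpers

/-- If `M` carries a BP'-rank `rk` whose rank function is definable with
parameters in `C ⊆ M`, and `N` is an elementary extension of `M`, then the canonical
extension of `rk` to `N` is a BP₀'-rank relative to the same set of parameters. -/
theorem canonExt_isBP0'Rank (L : FirstOrder.Language.{u, v})
    (M : Type w) (N : Type w) [L.Structure M] [L.Structure N]
    (r : RankFunction L M) (C : Set M) (h : r.IsBP'Rank C)
    (f : M ↪ₑ[L] N) (r' : RankFunction L N) (hr' : IsCanonExt r f r') :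
    r'.IsBP0'Rank (⇑f '' C) := by
  obtain ⟨h1, h1', h2, h4⟩ := h
  refine ⟨canonExt_weakMono h1 h2 hr', ?_, fun φ k => (rank_transfers h1 h2 hr' φ k).definable,
    canonExt_elimInfinite (r := r) r' h4 f⟩
  rintro n m A hA ⟨a', ha'⟩ φ
  obtain ⟨P, hP⟩ := Transfers.of_definable hA
  -- An index set over `f '' C` has points coming from `M`; their members have finite degree.
  obtain ⟨a, ha⟩ := hP.exists_of_exists a' ha'
  exact ⟨f ∘ a, (hP.apply_comp a).2 ha, canonExt_hasFiniteDegree h1 h1' h2 hr' φ a⟩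

end BP
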